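/- Let A be a complex unital Banach algebra and a, b, c ∈ A satisfying aca = aba. Then the ag-Drazin spectra satisfy σ_ad(ac) = σ_ad(ba). -/

import Mathlib

open Filter Topology

/-- An element of a complex Banach algebra is quasinilpotent if its spectrum is `{0}`. -/
def IsQuasinilpotent {A : Type*} [NormedRing A] [NormedAlgebra ℂ A] (b : A) : Prop :=
  spectrum ℂ b = {0}

/-- `a` is generalized Drazin invertible. -/
def IsGDrazinInv {A : Type*} [NormedRing A] [NormedAlgebra ℂ A] (a : A) : Prop :=
  ∃ x : A, a * x = x * a ∧ x * a * x = x ∧ IsQuasinilpotent (a - a ^ 2 * x)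

/-- `a ∈ A^acc`: `a - λ1` is generalized Drazin invertible for all nonzero `λ`. -/
def MemAcc {A : Type*} [NormedRing A] [NormedAlgebra ℂ A] (a : A) : Prop :=
  ∀ l : ℂ, l ≠ 0 → IsGDrazinInv (a - l • (1 : A))

/-- `x` is an ag-Drazin inverse of `a`. -/
def IsAgDrazinInverseOf {A : Type*} [NormedRing A] [NormedAlgebra ℂ A] (x a : A) : Prop :=
  a * x = x * a ∧ x * a * x = x ∧ MemAcc (a - a ^ 2 * x)

/-- `a` is ag-Drazin invertible. -/
def IsAgDrazinInv {A : Type*} [NormedRing A] [NormedAlgebra ℂ A] (a : A) : Prop :=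
  ∃ x : A, IsAgDrazinInverseOf x a

/-- The generalized Drazin spectrum. -/
def gDrazinSpectrum {A : Type*} [NormedRing A] [NormedAlgebra ℂ A] (a : A) : Set ℂ :=
  {l : ℂ | ¬ IsGDrazinInv (a - l • (1 : A))}

/-- The ag-Drazin spectrum. -/
def agDrazinSpectrum {A : Type*} [NormedRing A] [NormedAlgebra ℂ A] (a : A) : Set ℂ :=
  {l : ℂ | ¬ IsAgDrazinInv (a - l • (1 : A))}

/-!
In a Banach algebra the ag-Drazin spectrum is the set of accumulation points of accumulation points
of the spectrum. Indeed `a` is generalized Drazin invertible iff `0` is not an accumulation point of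
`σ(a)`: if `x` commutes with `a` and `xax = x`, then `σ(a)` and `σ(a - a²x)` agree in a punctured
neighbourhood of `0`; conversely the Riesz projection of a small circle around `0` produces `x`.
So `a ∈ A^acc` iff `σ(a)` accumulates at most at `0`, and the same two arguments describe the
ag-Drazin spectrum, now with a circle around `0` that avoids `σ(a)` and encloses no accumulation
point of `σ(a)` other than `0`.

If `aca = aba`, then `ba = ca + (b - c)a` with `a(b - c)a = 0`, so `σ(ac)`, `σ(ca)` and `σ(ba)`
differ at most by the point `0`, which does not affect accumulation points.
-/

section Resolvent

variable {A : Type*} [Ring A]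

theorem spectrum_sub_smul_one {𝕜 : Type*} [CommRing 𝕜] [Algebra 𝕜 A] (a : A) (l : 𝕜) :
    spectrum 𝕜 (a - l • (1 : A)) = (· + l) ⁻¹' spectrum 𝕜 a := by
  ext μ
  rw [Set.mem_preimage, spectrum.mem_iff, spectrum.mem_iff, map_add,
    Algebra.algebraMap_eq_smul_one l, sub_sub_eq_add_sub]

theorem commute_resolvent {𝕜 : Type*} [CommSemiring 𝕜] [Algebra 𝕜 A] (a : A) (z : 𝕜) :
    Commute a (resolvent a z) := by
  have hcomm : Commute a (algebraMap 𝕜 A z - a) :=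
    (Algebra.commute_algebraMap_right z a).sub_right (.refl a)
  by_cases hz : z ∈ resolventSet 𝕜 a
  · rw [spectrum.resolvent_eq hz]
    exact hcomm.units_inv_right
  · rw [resolvent, Ring.inverse_non_unit _ hz]
    exact .zero_right a

theorem algebraMap_sub_mul_resolvent {𝕜 : Type*} [CommRing 𝕜] [Algebra 𝕜 A] {a : A}
    {z : 𝕜} (hz : z ∈ resolventSet 𝕜 a) (μ : 𝕜) :
    (algebraMap 𝕜 A μ - a) * resolvent a z = 1 - (z - μ) • resolvent a z := by
  have hinv : (algebraMap 𝕜 A z - a) * resolvent a z = 1 := Ring.mul_inverse_cancel _ hz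
  rw [← hinv, Algebra.smul_def, ← sub_mul, map_sub, sub_sub_sub_cancel_left]

end Resolvent

section Spectrum

variable {𝕜 A : Type*} [Field 𝕜] [Ring A] [Algebra 𝕜 A]

theorem isUnit_algebraMap_sub_add_iff {u v : A} (huv : u * v = 0) {μ : 𝕜} (hμ : μ ≠ 0) :
    IsUnit (algebraMap 𝕜 A μ - (u + v)) ↔
      IsUnit ((algebraMap 𝕜 A μ - u) * (algebraMap 𝕜 A μ - v)) := by
  have hfactor : (algebraMap 𝕜 A μ - u) * (algebraMap 𝕜 A μ - v) =
      algebraMap 𝕜 A μ * (algebraMap 𝕜 A μ - (u + v)) := by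
    rw [sub_mul _ u, mul_sub, mul_sub, mul_sub, mul_add, huv, ← Algebra.commutes μ u]
    abel
  obtain ⟨w, hw⟩ : IsUnit (algebraMap 𝕜 A μ) := hμ.isUnit.map _
  rw [hfactor, ← hw, Units.isUnit_units_mul]

theorem spectrum_add_diff_zero_of_mul_eq_zero {u v : A} (huv : u * v = 0) (hvu : v * u = 0) :
    spectrum 𝕜 (u + v) \ {0} = (spectrum 𝕜 u ∪ spectrum 𝕜 v) \ {0} := by
  ext μ
  refine and_congr_left fun hμ : μ ≠ 0 => ?_
  have hcomm : Commute (algebraMap 𝕜 A μ - u) (algebraMap 𝕜 A μ - v) :=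
    (Algebra.commute_algebraMap_left μ _).sub_left
      ((Algebra.commute_algebraMap_right μ u).sub_right (huv.trans hvu.symm))
  rw [Set.mem_union, ← not_iff_not, not_or, spectrum.notMem_iff, spectrum.notMem_iff,
    spectrum.notMem_iff, isUnit_algebraMap_sub_add_iff huv hμ, hcomm.isUnit_mul_iff]

theorem spectrum_add_diff_zero_of_isNilpotent {u v : A} (huv : u * v = 0) (hv : IsNilpotent v) :
    spectrum 𝕜 (u + v) \ {0} = spectrum 𝕜 u \ {0} := by
  ext μ
  refine and_congr_left fun hμ : μ ≠ 0 => not_congr ?_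
  obtain ⟨w, hw⟩ : IsUnit (algebraMap 𝕜 A μ - v) := by
    rw [sub_eq_add_neg]
    exact hv.neg.isUnit_add_left_of_commute (hμ.isUnit.map _)
      (Algebra.commute_algebraMap_right μ (-v))
  rw [spectrum.mem_resolventSet_iff, spectrum.mem_resolventSet_iff,
    isUnit_algebraMap_sub_add_iff huv hμ, ← hw, Units.isUnit_mul_units]

theorem spectrum_diff_zero_eq_of_mul_mul_eq_mul_mul {a b c : A} (h : a * c * a = a * b * a) :
    spectrum 𝕜 (a * c) \ {0} = spectrum 𝕜 (b * a) \ {0} := by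
  have hann : a * ((b - c) * a) = 0 := by
    rw [sub_mul, mul_sub, ← mul_assoc, ← mul_assoc, h, sub_self]
  have hnil : IsNilpotent ((b - c) * a) := ⟨2, by rw [sq, mul_assoc, hann, mul_zero]⟩
  have hmul : c * a * ((b - c) * a) = 0 := by rw [mul_assoc, hann, mul_zero]
  rw [spectrum.nonzero_mul_comm, ← spectrum_add_diff_zero_of_isNilpotent hmul hnil, ← add_mul,
    add_sub_cancel]

theorem notMem_spectrum_mul_of_isIdempotentElem {a p y : A} (hp : IsIdempotentElem p)
    (hay : Commute a y) {μ : 𝕜} (hμ : μ ≠ 0) (hy : (algebraMap 𝕜 A μ - a) * y = p) :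
    μ ∉ spectrum 𝕜 (a * p) := by
  have hap : Commute a p :=
    hy ▸ ((Algebra.commute_algebraMap_right μ a).sub_right (Commute.refl a)).mul_right hay
  have hyp : Commute y p :=
    hy ▸ ((Algebra.commute_algebraMap_right μ y).sub_right hay.symm).mul_right (Commute.refl y)
  have hcomm : Commute (a * p) (y * p + μ⁻¹ • (1 - p)) :=
    .add_right (.mul_left (hay.mul_right hap) (.mul_right hyp.symm (.refl p)))
      (.smul_right (.sub_right (.one_right _) (hap.mul_left (.refl p))) _)
  have hinv : (algebraMap 𝕜 A μ - a * p) * (y * p + μ⁻¹ • (1 - p)) = 1 := by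
    have hrotate : a * p * (y * p) = a * y * p := by
      rw [mul_assoc, ← mul_assoc p y, ← hyp.eq, mul_assoc, hp.eq, ← mul_assoc]
    have hleft : (algebraMap 𝕜 A μ - a * p) * (y * p) = p := by
      rw [sub_mul, hrotate, ← mul_assoc, ← sub_mul, ← sub_mul, hy, hp.eq]
    have hright : a * p * (1 - p) = 0 := by
      rw [mul_assoc, hp.mul_one_sub_self, mul_zero]
    rw [mul_add, hleft, mul_smul_comm, sub_mul, hright, sub_zero, ← Algebra.smul_def,
      inv_smul_smul₀ hμ, add_sub_cancel]
  refine spectrum.notMem_iff.2 (Commute.isUnit_mul_iff ?_ |>.1 (hinv ▸ isUnit_one)).1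
  exact (Algebra.commute_algebraMap_left μ _).sub_left hcomm

theorem exists_outerInverse_of_isIdempotentElem_mul {S : Type*} [Semigroup S] {a y : S}
    (hay : Commute a y) (hidem : IsIdempotentElem (a * y)) :
    ∃ x, Commute a x ∧ x * a * x = x ∧ a * x = a * y := by
  have hcomm : Commute a (y * (a * y)) := hay.mul_right (.mul_right (.refl a) hay)
  have hmul : a * (y * (a * y)) = a * y := by rw [← mul_assoc, hidem.eq]
  exact ⟨y * (a * y), hcomm, by rw [mul_assoc, hmul, mul_assoc, hidem.eq], hmul⟩

theorem spectrum_diff_zero_eq_union_of_outerInverse {a x : A} (hax : Commute a x)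
    (hx : x * a * x = x) :
    spectrum 𝕜 a \ {0} = (spectrum 𝕜 (a - a ^ 2 * x) ∪ spectrum 𝕜 (a ^ 2 * x)) \ {0} := by
  have hcomm : Commute a (a ^ 2 * x) := ((Commute.refl a).pow_right 2).mul_right hax
  have horth : (a - a ^ 2 * x) * (a ^ 2 * x) = 0 := by
    have hidem : a ^ 2 * x * (a ^ 2 * x) = a * (a ^ 2 * x) := calc
      a ^ 2 * x * (a ^ 2 * x) = a ^ 2 * (x * a * (a * x)) := by noncomm_ring
      _ = a ^ 2 * (x * a * x * a) := by rw [hax.eq]; noncomm_ring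
      _ = a ^ 2 * (a * x) := by rw [hx, hax.eq]
      _ = a * (a ^ 2 * x) := by noncomm_ring
    rw [sub_mul, hidem, sub_self]
  rw [← spectrum_add_diff_zero_of_mul_eq_zero horth, sub_add_cancel]
  exact (hcomm.sub_left (.refl _)).eq ▸ horth

theorem notMem_spectrum_sq_mul_of_isUnit {a x : A} (hax : Commute a x) (hx : x * a * x = x)
    {μ : 𝕜} (hμ : μ ≠ 0) (hunit : IsUnit (1 - μ • x)) : μ ∉ spectrum 𝕜 (a ^ 2 * x) := by
  have hsq : a ^ 2 * x * x = a * x := by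
    rw [sq, mul_assoc a a x, mul_assoc, hax.eq, hx, hax.eq]
  have hidem : a ^ 2 * x * (a * x) = a ^ 2 * x := by
    rw [mul_assoc, ← mul_assoc x, hx]
  have hfactor :
      (algebraMap 𝕜 A μ - a ^ 2 * x) * (μ⁻¹ • (1 - a * x) - x) = 1 - μ • x := by
    rw [sub_mul, mul_sub (a ^ 2 * x), mul_smul_comm, mul_sub (a ^ 2 * x), hidem, hsq,
      ← Algebra.smul_def, smul_sub, smul_inv_smul₀ hμ, mul_one, sub_self, smul_zero]
    abel
  have hcomm : Commute (a ^ 2 * x) (μ⁻¹ • (1 - a * x) - x) := by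
    have ha : Commute (a ^ 2 * x) a := .mul_left (.pow_left (.refl a) 2) hax.symm
    have hx : Commute (a ^ 2 * x) x := .mul_left (hax.pow_left 2) (.refl x)
    exact .sub_right (.smul_right (.sub_right (.one_right _) (ha.mul_right hx)) _) hx
  exact spectrum.notMem_iff.2 (((Algebra.commute_algebraMap_left μ _).sub_left
    hcomm).isUnit_mul_iff.1 (hfactor ▸ hunit)).1

theorem mem_spectrum_of_mem_spectrum_sub_sq_mul {a x : A} (hax : Commute a x)
    (hx : x * a * x = x) {μ : 𝕜} (hμ : μ ≠ 0) (h : μ ∈ spectrum 𝕜 (a - a ^ 2 * x)) :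
    μ ∈ spectrum 𝕜 a :=
  ((spectrum_diff_zero_eq_union_of_outerInverse hax hx).ge ⟨.inl h, hμ⟩).1

theorem mem_spectrum_sub_sq_mul_iff {a x : A} (hax : Commute a x)
    (hx : x * a * x = x) {μ : 𝕜} (hμ : μ ≠ 0) (hunit : IsUnit (1 - μ • x)) :
    μ ∈ spectrum 𝕜 (a - a ^ 2 * x) ↔ μ ∈ spectrum 𝕜 a :=
  ⟨mem_spectrum_of_mem_spectrum_sub_sq_mul hax hx hμ, fun h =>
    ((spectrum_diff_zero_eq_union_of_outerInverse hax hx).le ⟨h, hμ⟩).1.resolve_right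
      (notMem_spectrum_sq_mul_of_isUnit hax hx hμ hunit)⟩

end Spectrum

section DerivedSet

open Metric

variable {X Y : Type*} [TopologicalSpace X] [TopologicalSpace Y]

theorem mem_derivedSet_iff_frequently {x : X} {S : Set X} :
    x ∈ derivedSet S ↔ ∃ᶠ y in 𝓝[≠] x, y ∈ S := by
  rw [mem_derivedSet, accPt_iff_frequently_nhdsNE]

theorem notMem_derivedSet_iff_eventually {x : X} {S : Set X} :
    x ∉ derivedSet S ↔ ∀ᶠ y in 𝓝[≠] x, y ∉ S := by
  rw [mem_derivedSet_iff_frequently, not_frequently]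

theorem mem_derivedSet_congr {x : X} {S T : Set X} (h : ∀ᶠ y in 𝓝[≠] x, (y ∈ S ↔ y ∈ T)) :
    x ∈ derivedSet S ↔ x ∈ derivedSet T := by
  rw [mem_derivedSet_iff_frequently, mem_derivedSet_iff_frequently, frequently_congr h]

theorem derivedSet_preimage_homeomorph (e : X ≃ₜ Y) (S : Set Y) :
    derivedSet (e ⁻¹' S) = e ⁻¹' derivedSet S := by
  ext x
  rw [Set.mem_preimage, mem_derivedSet, mem_derivedSet, ← comap_principal,
    e.isOpenEmbedding.accPt_comap_iff]

theorem derivedSet_preimage_add_right {G : Type*} [TopologicalSpace G] [AddGroup G]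
    [ContinuousAdd G] (g : G) (S : Set G) :
    derivedSet ((· + g) ⁻¹' S) = (· + g) ⁻¹' derivedSet S :=
  derivedSet_preimage_homeomorph (Homeomorph.addRight g) S

theorem eventually_mem_derivedSet_congr [T1Space X] {x : X} {S T : Set X}
    (h : ∀ᶠ y in 𝓝[≠] x, (y ∈ S ↔ y ∈ T)) :
    ∀ᶠ y in 𝓝[≠] x, (y ∈ derivedSet S ↔ y ∈ derivedSet T) := by
  filter_upwards [(eventually_nhdsWithin_eventually_nhds_iff_of_isOpen isOpen_ne).2 h] with y hy
  exact mem_derivedSet_congr (hy.filter_mono nhdsWithin_le_nhds)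

theorem derivedSet_diff_singleton [T1Space X] (S : Set X) (x : X) :
    derivedSet (S \ {x}) = derivedSet S := by
  ext y
  have hne : ∀ᶠ z in 𝓝[≠] y, z ≠ x := nhdsWithin_compl_singleton_le y x self_mem_nhdsWithin
  exact mem_derivedSet_congr (hne.mono fun z hz => and_iff_left hz)

theorem exists_sphere_disjoint_of_notMem_derivedSet_derivedSet {M : Type*} [PseudoMetricSpace M]
    [ProperSpace M] {S : Set M} (hS : IsClosed S) {x : M} (hx : x ∉ derivedSet (derivedSet S)) :
    ∃ r > 0, Disjoint (sphere x r) S ∧ ∀ y ∈ ball x r, y ≠ x → y ∉ derivedSet S := by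
  rw [notMem_derivedSet_iff_eventually, nhdsWithin_basis_ball.eventually_iff] at hx
  obtain ⟨ε, hε, hball⟩ := hx
  set K := S ∩ (closedBall x (ε / 2) \ ball x (ε / 3))
  have hK : IsCompact K := ((isCompact_closedBall _ _).diff isOpen_ball).inter_left hS
  have hKfin : K.Finite := by
    by_contra hinf
    obtain ⟨y, hyK, hy⟩ := Set.Infinite.exists_accPt_of_subset_isCompact hinf hK subset_rfl
    refine hball ⟨?_, ?_⟩ (derivedSet_mono _ _ Set.inter_subset_left hy)
    · exact closedBall_subset_ball (by linarith) hyK.2.1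
    · rintro rfl
      exact hyK.2.2 (mem_ball_self (by positivity))
  obtain ⟨r, ⟨hr₁, hr₂⟩, hrK⟩ : ∃ r ∈ Set.Ioo (ε / 3) (ε / 2), r ∉ (dist · x) '' K :=
    (Set.Ioo_infinite (by linarith)).exists_notMem_finite (hKfin.image _)
  refine ⟨r, by linarith, Set.disjoint_left.2 fun y hyr hyS => hrK ⟨y, ⟨hyS, ?_⟩, hyr⟩, ?_⟩
  · rw [mem_sphere] at hyr
    simp only [Set.mem_sdiff, mem_closedBall, mem_ball]
    constructor <;> linarith
  · exact fun y hyr hyx => hball ⟨ball_subset_ball (by linarith) hyr, hyx⟩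

end DerivedSet

section CircleIntegral

variable {E F : Type*} [NormedAddCommGroup E] [NormedSpace ℂ E] [CompleteSpace E]
  [NormedAddCommGroup F] [NormedSpace ℂ F] [CompleteSpace F]

theorem circleIntegral_clm_apply (L : E →L[ℂ] F) {f : ℂ → E} {c : ℂ} {r : ℝ}
    (hf : CircleIntegrable f c r) : (∮ z in C(c, r), L (f z)) = L (∮ z in C(c, r), f z) := by
  simp only [circleIntegral, ← map_smul]
  exact L.intervalIntegral_comp_comm hf.out

variable {A : Type*} [NormedRing A] [NormedAlgebra ℂ A] [CompleteSpace A]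

theorem circleIntegral_const_mul (a : A) {f : ℂ → A} {c : ℂ} {r : ℝ}
    (hf : CircleIntegrable f c r) :
    (∮ z in C(c, r), a * f z) = a * ∮ z in C(c, r), f z :=
  circleIntegral_clm_apply (ContinuousLinearMap.mul ℂ A a) hf

theorem circleIntegral_mul_const {f : ℂ → A} {c : ℂ} {r : ℝ} (hf : CircleIntegrable f c r)
    (a : A) : (∮ z in C(c, r), f z * a) = (∮ z in C(c, r), f z) * a :=
  circleIntegral_clm_apply ((ContinuousLinearMap.mul ℂ A).flip a) hf

theorem commute_circleIntegral {a : A} {f : ℂ → A} {c : ℂ} {r : ℝ}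
    (hf : CircleIntegrable f c r) (h : ∀ z, Commute a (f z)) :
    Commute a (∮ z in C(c, r), f z) := by
  rw [Commute, SemiconjBy, ← circleIntegral_const_mul a hf, ← circleIntegral_mul_const hf]
  simp only [(h _).eq]

end CircleIntegral

theorem continuousOn_sub_inv_of_notMem {𝕜 : Type*} [NormedField 𝕜] {s : Set 𝕜} {μ : 𝕜}
    (hμ : μ ∉ s) : ContinuousOn (fun z => (z - μ)⁻¹) s :=
  (continuousOn_id.sub continuousOn_const).inv₀ fun _ hz =>
    sub_ne_zero.2 (ne_of_mem_of_not_mem hz hμ)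

theorem continuousOn_resolvent {𝕜 A : Type*} [NontriviallyNormedField 𝕜] [NormedRing A]
    [NormedAlgebra 𝕜 A] [CompleteSpace A] (a : A) :
    ContinuousOn (resolvent a) (resolventSet 𝕜 a) :=
  fun _ hz => (spectrum.hasDerivAt_resolvent_const_left hz).continuousAt.continuousWithinAt

section RieszProjection

open Metric

variable {A : Type*} [NormedRing A] [NormedAlgebra ℂ A] [CompleteSpace A]

/-- The Riesz projection of `a` for the part of its spectrum enclosed by the circle of center `c`
and radius `r`. It is meaningful only when that circle lies in the resolvent set of `a`. -/
noncomputable def rieszProjection (a : A) (c : ℂ) (r : ℝ) : A :=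
  (2 * Real.pi * Complex.I : ℂ)⁻¹ • ∮ z in C(c, r), resolvent a z

/-- The Cauchy transform of the resolvent of `a` along the circle of center `c` and radius `r`. It
inverts `μ - a` up to the Riesz projection. -/
noncomputable def resolventCauchyTransform (a : A) (c : ℂ) (r : ℝ) (μ : ℂ) : A :=
  (2 * Real.pi * Complex.I : ℂ)⁻¹ • ∮ z in C(c, r), (z - μ)⁻¹ • resolvent a z

variable {a : A} {c μ : ℂ} {r : ℝ}

theorem circleIntegrable_resolvent (hr : 0 ≤ r) (hs : sphere c r ⊆ resolventSet ℂ a) :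
    CircleIntegrable (resolvent a) c r :=
  ((continuousOn_resolvent a).mono hs).circleIntegrable hr

theorem circleIntegrable_sub_inv_smul_resolvent (hr : 0 ≤ r) (hs : sphere c r ⊆ resolventSet ℂ a)
    (hμ : μ ∉ sphere c r) : CircleIntegrable (fun z => (z - μ)⁻¹ • resolvent a z) c r :=
  ((continuousOn_sub_inv_of_notMem hμ).smul
    ((continuousOn_resolvent a).mono hs)).circleIntegrable hr

theorem commute_resolventCauchyTransform (hr : 0 ≤ r) (hs : sphere c r ⊆ resolventSet ℂ a)
    (hμ : μ ∉ sphere c r) : Commute a (resolventCauchyTransform a c r μ) :=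
  (commute_circleIntegral (circleIntegrable_sub_inv_smul_resolvent hr hs hμ) fun z =>
    (commute_resolvent a z).smul_right _).smul_right _

theorem algebraMap_sub_mul_resolventCauchyTransform (hr : 0 ≤ r)
    (hs : sphere c r ⊆ resolventSet ℂ a) (hμ : μ ∉ sphere c r) :
    (algebraMap ℂ A μ - a) * resolventCauchyTransform a c r μ =
      ((2 * Real.pi * Complex.I : ℂ)⁻¹ * ∮ z in C(c, r), (z - μ)⁻¹) • 1 -
        rieszProjection a c r := by
  have hint := circleIntegrable_sub_inv_smul_resolvent hr hs hμ
  have hpointwise : Set.EqOn (fun z => (algebraMap ℂ A μ - a) * ((z - μ)⁻¹ • resolvent a z))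
      (fun z => (z - μ)⁻¹ • (1 : A) - resolvent a z) (sphere c r) := fun z hz => by
    have hzμ : z - μ ≠ 0 := sub_ne_zero.2 (ne_of_mem_of_not_mem hz hμ)
    simp only [mul_smul_comm, algebraMap_sub_mul_resolvent (hs hz), smul_sub, inv_smul_smul₀ hzμ]
  have hconst : CircleIntegrable (fun z => (z - μ)⁻¹ • (1 : A)) c r :=
    ((continuousOn_sub_inv_of_notMem hμ).smul continuousOn_const).circleIntegrable hr
  rw [resolventCauchyTransform, mul_smul_comm, ← circleIntegral_const_mul _ hint,
    circleIntegral.integral_congr hr hpointwise,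
    circleIntegral.integral_sub hconst (circleIntegrable_resolvent hr hs), smul_sub,
    circleIntegral.integral_smul_const, smul_smul, rieszProjection]

theorem algebraMap_sub_mul_resolventCauchyTransform_of_mem_ball
    (hs : sphere c r ⊆ resolventSet ℂ a) (hμ : μ ∈ ball c r) :
    (algebraMap ℂ A μ - a) * resolventCauchyTransform a c r μ = 1 - rieszProjection a c r := by
  rw [algebraMap_sub_mul_resolventCauchyTransform (pos_of_mem_ball hμ).le hs
    (sphere_disjoint_ball.notMem_of_mem_right hμ),
    circleIntegral.integral_sub_inv_of_mem_ball hμ, inv_mul_cancel₀ Complex.two_pi_I_ne_zero,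
    one_smul]

theorem algebraMap_sub_mul_resolventCauchyTransform_of_notMem_closedBall (hr : 0 ≤ r)
    (hs : sphere c r ⊆ resolventSet ℂ a) (hμ : μ ∉ closedBall c r) :
    (algebraMap ℂ A μ - a) * resolventCauchyTransform a c r μ = -rieszProjection a c r := by
  have hzero : ∮ z in C(c, r), (z - μ)⁻¹ = 0 := by
    refine DiffContOnCl.circleIntegral_eq_zero hr (DifferentiableOn.diffContOnCl fun z hz => ?_)
    have hzμ : z ≠ μ := ne_of_mem_of_not_mem (closure_ball_subset_closedBall hz) hμ
    exact ((differentiableAt_id.sub_const μ).inv (sub_ne_zero.2 hzμ)).differentiableWithinAt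
  rw [algebraMap_sub_mul_resolventCauchyTransform hr hs
    (fun h => hμ (sphere_subset_closedBall h)), hzero, mul_zero, zero_smul, zero_sub]

theorem rieszProjection_eq_of_annulus_subset {r' : ℝ} (hr' : 0 < r') (hle : r' ≤ r)
    (hs : closedBall c r \ ball c r' ⊆ resolventSet ℂ a) :
    rieszProjection a c r = rieszProjection a c r' := by
  rw [rieszProjection, rieszProjection,
    Complex.circleIntegral_eq_of_differentiable_on_annulus_off_countable hr' hle
      Set.countable_empty ((continuousOn_resolvent a).mono hs) fun z hz => ?_]
  exact (spectrum.hasDerivAt_resolvent_const_left <| hs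
    ⟨ball_subset_closedBall hz.1.1, fun h => hz.1.2 (ball_subset_closedBall h)⟩).differentiableAt

theorem circleIntegral_resolventCauchyTransform_eq_zero {r' : ℝ} (hr' : 0 ≤ r') (hlt : r' < r)
    (hs : sphere c r ⊆ resolventSet ℂ a) :
    ∮ z in C(c, r'), resolventCauchyTransform a c r z = 0 := by
  lift r to NNReal using hr'.trans hlt.le
  have hpow := hasFPowerSeriesOn_cauchy_integral (circleIntegrable_resolvent r.2 hs)
    (NNReal.coe_pos.1 (hr'.trans_lt hlt))
  have hdiff : DifferentiableOn ℂ (resolventCauchyTransform a c r) (ball c r) := by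
    rw [← Metric.eball_coe]
    exact hpow.differentiableOn
  exact DiffContOnCl.circleIntegral_eq_zero hr' <| (hdiff.mono <|
    closure_ball_subset_closedBall.trans (closedBall_subset_ball hlt)).diffContOnCl

theorem isIdempotentElem_rieszProjection (hr : 0 < r) (hs : sphere c r ⊆ resolventSet ℂ a) :
    IsIdempotentElem (rieszProjection a c r) := by
  obtain ⟨r', ⟨hr', hlt⟩, hball⟩ :
      ∃ r' ∈ Set.Ioo 0 r, closedBall c r \ resolventSet ℂ a ⊆ ball c r' :=
    exists_pos_lt_subset_ball hr
      (isClosed_closedBall.sdiff (spectrum.isOpen_resolventSet a)) fun z hz =>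
        (mem_closedBall.1 hz.1).lt_of_ne fun h => hz.2 (hs h)
  have hannulus : closedBall c r \ ball c r' ⊆ resolventSet ℂ a := Set.sdiff_subset_comm.1 hball
  have hs' : sphere c r' ⊆ resolventSet ℂ a := fun z hz => hannulus
    ⟨closedBall_subset_closedBall hlt.le (sphere_subset_closedBall hz),
      sphere_disjoint_ball.notMem_of_mem_left hz⟩
  have hpointwise : Set.EqOn (fun z => resolvent a z * (1 - rieszProjection a c r))
      (resolventCauchyTransform a c r) (sphere c r') := fun z hz => by
    beta_reduce
    rw [← algebraMap_sub_mul_resolventCauchyTransform_of_mem_ball hs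
      (closedBall_subset_ball hlt (sphere_subset_closedBall hz)), ← mul_assoc, resolvent,
      Ring.inverse_mul_cancel _ (hs' hz), one_mul]
  have hzero : rieszProjection a c r * (1 - rieszProjection a c r) = 0 := by
    nth_rw 1 [rieszProjection_eq_of_annulus_subset hr' hlt.le hannulus, rieszProjection]
    rw [smul_mul_assoc, ← circleIntegral_mul_const (circleIntegrable_resolvent hr'.le hs'),
      circleIntegral.integral_congr hr'.le hpointwise,
      circleIntegral_resolventCauchyTransform_eq_zero hr'.le hlt hs, smul_zero]
  rwa [mul_sub, mul_one, sub_eq_zero, eq_comm] at hzero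

theorem exists_outerInverse_spectrum_subset_ball (hr : 0 < r)
    (hs : sphere 0 r ⊆ resolventSet ℂ a) :
    ∃ x, Commute a x ∧ x * a * x = x ∧ spectrum ℂ (a - a ^ 2 * x) ⊆ ball 0 r := by
  set p := rieszProjection a 0 r
  have hp : IsIdempotentElem p := isIdempotentElem_rieszProjection hr hs
  have hcomm : Commute a (-resolventCauchyTransform a 0 r 0) :=
    (commute_resolventCauchyTransform hr.le hs (by simpa using hr.ne)).neg_right
  have hcompl : a * -resolventCauchyTransform a 0 r 0 = 1 - p := by
    rw [mul_neg, ← neg_mul, ← zero_sub, ← map_zero (algebraMap ℂ A)]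
    exact algebraMap_sub_mul_resolventCauchyTransform_of_mem_ball hs (mem_ball_self hr)
  obtain ⟨x, hax, hx, hmul⟩ :=
    exists_outerInverse_of_isIdempotentElem_mul hcomm (hcompl ▸ hp.one_sub)
  have hrest : a - a ^ 2 * x = a * p := by
    rw [sq, mul_assoc, hmul, hcompl, mul_sub, mul_one, sub_sub_cancel]
  refine ⟨x, hax, hx, fun μ hμ => ?_⟩
  by_contra hball
  rw [mem_ball, not_lt] at hball
  have hμ0 : μ ≠ 0 := by
    rintro rfl
    exact hball.not_gt (mem_ball_self hr)
  rcases hball.eq_or_lt with hsphere | hout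
  · exact mem_spectrum_of_mem_spectrum_sub_sq_mul hax hx hμ0 hμ (hs hsphere.symm)
  · have hout : μ ∉ closedBall 0 r := not_le.2 hout
    refine notMem_spectrum_mul_of_isIdempotentElem hp (commute_resolventCauchyTransform hr.le hs
      fun h => hout (sphere_subset_closedBall h)).neg_right hμ0 ?_ (hrest ▸ hμ)
    rw [mul_neg, algebraMap_sub_mul_resolventCauchyTransform_of_notMem_closedBall hr.le hs hout,
      neg_neg]

end RieszProjection

theorem eventually_mem_spectrum_sub_sq_mul_iff {𝕜 A : Type*} [NormedField 𝕜] [NormedRing A]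
    [NormedAlgebra 𝕜 A] [CompleteSpace A] {a x : A} (hax : Commute a x) (hx : x * a * x = x) :
    ∀ᶠ μ : 𝕜 in 𝓝[≠] 0, (μ ∈ spectrum 𝕜 (a - a ^ 2 * x) ↔ μ ∈ spectrum 𝕜 a) := by
  have hcont : Continuous fun μ : 𝕜 => 1 - μ • x := by fun_prop
  have hunit : ∀ᶠ μ : 𝕜 in 𝓝 0, IsUnit (1 - μ • x) :=
    hcont.continuousAt.eventually (Units.isOpen.mem_nhds (by simp))
  filter_upwards [self_mem_nhdsWithin, hunit.filter_mono nhdsWithin_le_nhds] with μ hμ hμunit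
  exact mem_spectrum_sub_sq_mul_iff hax hx hμ hμunit

section DrazinInvertibility

open Metric

variable {A : Type*} [NormedRing A] [NormedAlgebra ℂ A] [CompleteSpace A] [Nontrivial A]

theorem isGDrazinInv_iff_zero_notMem_derivedSet (a : A) :
    IsGDrazinInv a ↔ 0 ∉ derivedSet (spectrum ℂ a) := by
  rw [notMem_derivedSet_iff_eventually]
  constructor
  · rintro ⟨x, hax, hx, hqn⟩
    filter_upwards [self_mem_nhdsWithin, eventually_mem_spectrum_sub_sq_mul_iff hax hx]
      with μ hμ hiff hmem
    exact hμ (hqn.le (hiff.2 hmem))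
  · intro h
    obtain ⟨ε, hε, hball⟩ := nhdsWithin_basis_ball.eventually_iff.1 h
    have hs : sphere 0 (ε / 2) ⊆ resolventSet ℂ a := fun z hz => not_not.1 <|
      hball ⟨sphere_subset_closedBall.trans (closedBall_subset_ball (half_lt_self hε)) hz,
        ne_of_mem_sphere hz (half_pos hε).ne'⟩
    obtain ⟨x, hax, hx, hsub⟩ := exists_outerInverse_spectrum_subset_ball (half_pos hε) hs
    refine ⟨x, hax, hx, (spectrum.nonempty _).subset_singleton_iff.1 fun μ hμ => ?_⟩
    by_contra hμ0
    exact hball ⟨ball_subset_ball (half_le_self hε.le) (hsub hμ), hμ0⟩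
      (mem_spectrum_of_mem_spectrum_sub_sq_mul hax hx hμ0 hμ)

theorem isGDrazinInv_sub_smul_one_iff (a : A) (l : ℂ) :
    IsGDrazinInv (a - l • (1 : A)) ↔ l ∉ derivedSet (spectrum ℂ a) := by
  rw [isGDrazinInv_iff_zero_notMem_derivedSet, spectrum_sub_smul_one,
    derivedSet_preimage_add_right, Set.mem_preimage, zero_add]

theorem memAcc_iff_derivedSet_subset (a : A) : MemAcc a ↔ derivedSet (spectrum ℂ a) ⊆ {0} :=
  forall_congr' fun l => by
    rw [isGDrazinInv_sub_smul_one_iff, not_imp_not, Set.mem_singleton_iff]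

theorem isAgDrazinInv_iff_zero_notMem_derivedSet_derivedSet (a : A) :
    IsAgDrazinInv a ↔ 0 ∉ derivedSet (derivedSet (spectrum ℂ a)) := by
  constructor
  · rintro ⟨x, hax, hx, hacc⟩
    rw [memAcc_iff_derivedSet_subset] at hacc
    rw [notMem_derivedSet_iff_eventually]
    filter_upwards [self_mem_nhdsWithin,
      eventually_mem_derivedSet_congr (eventually_mem_spectrum_sub_sq_mul_iff hax hx)]
      with μ hμ hiff hmem
    exact hμ (hacc (hiff.2 hmem))
  · intro h
    obtain ⟨r, hr, hdisj, hisol⟩ :=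
      exists_sphere_disjoint_of_notMem_derivedSet_derivedSet (spectrum.isClosed a) h
    obtain ⟨x, hax, hx, hsub⟩ :=
      exists_outerInverse_spectrum_subset_ball hr (Set.disjoint_compl_right_iff_subset.1 hdisj)
    refine ⟨x, hax, hx, (memAcc_iff_derivedSet_subset _).2 fun μ hμ => ?_⟩
    have hle : derivedSet (spectrum ℂ (a - a ^ 2 * x)) ⊆ derivedSet (spectrum ℂ a) := by
      rw [← derivedSet_diff_singleton _ 0]
      exact derivedSet_mono _ _ fun ν hν =>
        mem_spectrum_of_mem_spectrum_sub_sq_mul hax hx hν.2 hν.1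
    have hμball : μ ∈ ball 0 r :=
      hsub (isClosed_iff_derivedSet_subset _ |>.1 (spectrum.isClosed _) hμ)
    exact not_not.1 fun hμ0 => hisol μ hμball hμ0 (hle hμ)

theorem isAgDrazinInv_sub_smul_one_iff (a : A) (l : ℂ) :
    IsAgDrazinInv (a - l • (1 : A)) ↔ l ∉ derivedSet (derivedSet (spectrum ℂ a)) := by
  rw [isAgDrazinInv_iff_zero_notMem_derivedSet_derivedSet, spectrum_sub_smul_one,
    derivedSet_preimage_add_right, derivedSet_preimage_add_right, Set.mem_preimage, zero_add]

theorem agDrazinSpectrum_eq_derivedSet_derivedSet (a : A) :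
    agDrazinSpectrum a = derivedSet (derivedSet (spectrum ℂ a)) :=
  Set.ext fun l => not_iff_comm.1 (isAgDrazinInv_sub_smul_one_iff a l).symm

end DrazinInvertibility

theorem agDrazinSpectrum_eq_of_aca_aba {A : Type*} [NormedRing A] [NormedAlgebra ℂ A]
    [CompleteSpace A] (a b c : A) (h : a * c * a = a * b * a) :
    agDrazinSpectrum (a * c) = agDrazinSpectrum (b * a) := by
  cases subsingleton_or_nontrivial A
  · rw [Subsingleton.elim (a * c) (b * a)]
  · rw [agDrazinSpectrum_eq_derivedSet_derivedSet, agDrazinSpectrum_eq_derivedSet_derivedSet,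
      ← derivedSet_diff_singleton (spectrum ℂ (a * c)) 0,
      spectrum_diff_zero_eq_of_mul_mul_eq_mul_mul h, derivedSet_diff_singleton]
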